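/- For every ξ ∈ ℝ and every (a,b,c) ∈ 𝒯, the triple (f(a,b,c,ξ), f(b,c,a,ξ), f(c,a,b,ξ)) lies in 𝒯; that is, the three cevians AA_ξ, BB_ξ, CC_ξ of any non-degenerate triangle form a non-degenerate triangle. Equivalently, the diagonal {(ξ,ξ,ξ) : ξ ∈ ℝ} is contained in 𝔸. -/

import Mathlib

/-!
Let `H(x, y, z) = 4xy - (x + y - z)²`, which at the squares of the sides of a triangle is sixteen
times its squared area. The proof rests on two facts.

* A triple of positive reals `x, y, z` with `H(x², y², z²) > 0` lies in `T`, and conversely every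
  triple in `T` satisfies this (`mem_T_of_heron_pos`, `heron_pos_of_mem_T`).
* If `X, Y, Z` are the squared cevians with common parameter `ξ`, then
  `H(X, Y, Z) = (ξ² - ξ + 1)² H(a², b², c²)`, and `ξ² - ξ + 1 > 0`.

The radicands `X, Y, Z` are positive because each is a quadratic polynomial in `ξ` with positive
leading coefficient and discriminant `-H(a², b², c²)` (`radicand_pos`).
-/

/-- The set of side-length triples of non-degenerate triangles. -/
def T : Set (ℝ × ℝ × ℝ) :=
  {p | |p.1 - p.2.1| < p.2.2 ∧ p.2.2 < p.1 + p.2.1}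

/-- The cevian length `f a b c ρ = AA_ρ`. -/
noncomputable def f (a b c ρ : ℝ) : ℝ :=
  Real.sqrt (ρ * (ρ - 1) * a ^ 2 + ρ * b ^ 2 + (1 - ρ) * c ^ 2)

theorem mem_T_of_heron_pos {x y z : ℝ} (hx : 0 < x) (hy : 0 < y) (hz : 0 < z)
    (h : 0 < 4 * x ^ 2 * y ^ 2 - (x ^ 2 + y ^ 2 - z ^ 2) ^ 2) : (x, y, z) ∈ T := by
  have hxy : 0 < x * y := mul_pos hx hy
  obtain ⟨h1, h2⟩ : -(2 * (x * y)) < x ^ 2 + y ^ 2 - z ^ 2 ∧ x ^ 2 + y ^ 2 - z ^ 2 < 2 * (x * y) :=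
    abs_lt_of_sq_lt_sq' (by linarith) (by positivity)
  refine ⟨abs_lt_of_sq_lt_sq (a := x - y) ?_ hz.le, lt_of_pow_lt_pow_left₀ 2 (by positivity) ?_⟩
  · linarith
  · show z ^ 2 < (x + y) ^ 2
    linarith

theorem heron_pos_of_mem_T {a b c : ℝ} (h : (a, b, c) ∈ T) :
    0 < a ∧ 0 < b ∧ 0 < c ∧ 0 < 4 * a ^ 2 * b ^ 2 - (a ^ 2 + b ^ 2 - c ^ 2) ^ 2 := by
  obtain ⟨h1, h2⟩ : |a - b| < c ∧ c < a + b := h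
  obtain ⟨h3, h4⟩ := abs_lt.mp h1
  refine ⟨by linarith, by linarith, by linarith, ?_⟩
  have h5 : 0 < (a + b + c) * (a + b - c) * ((c + a - b) * (c - a + b)) :=
    mul_pos (mul_pos (by linarith) (by linarith)) (mul_pos (by linarith) (by linarith))
  linarith

theorem radicand_pos {a b c : ℝ} (ξ : ℝ) (ha : 0 < a)
    (h : 0 < 4 * a ^ 2 * b ^ 2 - (a ^ 2 + b ^ 2 - c ^ 2) ^ 2) :
    0 < ξ * (ξ - 1) * a ^ 2 + ξ * b ^ 2 + (1 - ξ) * c ^ 2 := by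
  -- Completing the square in `ξ`, after multiplication by `4a²`.
  have key : 0 < 4 * a ^ 2 * (ξ * (ξ - 1) * a ^ 2 + ξ * b ^ 2 + (1 - ξ) * c ^ 2) := by
    linarith [sq_nonneg (2 * a ^ 2 * ξ + (b ^ 2 - a ^ 2 - c ^ 2))]
  exact pos_of_mul_pos_right key (by positivity)

theorem cevians_equal_parameter_form_triangle (ξ : ℝ) (a b c : ℝ)
    (habc : (a, b, c) ∈ T) :
    (f a b c ξ, f b c a ξ, f c a b ξ) ∈ T := by
  obtain ⟨ha, hb, hc, h⟩ := heron_pos_of_mem_T habc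
  have hX := radicand_pos ξ ha h
  have hY := radicand_pos (b := c) (c := a) ξ hb (by linarith)
  have hZ := radicand_pos (b := a) (c := b) ξ hc (by linarith)
  refine mem_T_of_heron_pos (Real.sqrt_pos.2 hX) (Real.sqrt_pos.2 hY) (Real.sqrt_pos.2 hZ) ?_
  simp only [f, Real.sq_sqrt hX.le, Real.sq_sqrt hY.le, Real.sq_sqrt hZ.le]
  have hq : 0 < ξ ^ 2 - ξ + 1 := by linarith [sq_nonneg (ξ - 1 / 2)]
  have := mul_pos (pow_pos hq 2) h
  linarith
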